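/- An acyclic net AN is well-formed if and only if each transition of AN occurs in at least one firing sequence and all firing sequences of AN are well-formed. -/

import Mathlib

/-- A net: a triple of places, transitions, and a flow relation. -/
structure Net (α : Type*) where
  places : Set α
  transitions : Set α
  flow : α → α → Prop

namespace Net

variable {α : Type*}

/-- The set of direct predecessors (preset) of a node. -/
def pre (N : Net α) (x : α) : Set α := {z | N.flow z x}

/-- The set of direct successors (postset) of a node. -/
def post (N : Net α) (x : α) : Set α := {z | N.flow x z}

/-- Preset of a set of nodes. -/
def preSet (N : Net α) (X : Set α) : Set α := ⋃ x ∈ X, N.pre x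

/-- Postset of a set of nodes. -/
def postSet (N : Net α) (X : Set α) : Set α := ⋃ x ∈ X, N.post x

/-- Initial places: places with empty preset. -/
def initPlaces (N : Net α) : Set α := {p ∈ N.places | N.pre p = ∅}

/-- Final places: places with empty postset. -/
def finPlaces (N : Net α) : Set α := {p ∈ N.places | N.post p = ∅}

/-- An acyclic net: places and transitions are disjoint finite sets, places nonempty,
the flow relation relates only places to transitions and vice versa, is acyclic, and
every transition has at least one pre-place and one post-place. -/
def IsAcyclicNet (N : Net α) : Prop :=
  N.places.Finite ∧ N.transitions.Finite ∧
  Disjoint N.places N.transitions ∧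
  (∀ x y, N.flow x y →
    (x ∈ N.places ∧ y ∈ N.transitions) ∨ (x ∈ N.transitions ∧ y ∈ N.places)) ∧
  N.places.Nonempty ∧
  (∀ x, ¬ Relation.TransGen N.flow x x) ∧
  (∀ t ∈ N.transitions, (N.pre t).Nonempty ∧ (N.post t).Nonempty)

/-- An occurrence net: an acyclic net with `|pre p| ≤ 1` and `|post p| ≤ 1` for each place. -/
def IsOccurrenceNet (N : Net α) : Prop :=
  IsAcyclicNet N ∧ ∀ p ∈ N.places, (N.pre p).Subsingleton ∧ (N.post p).Subsingleton

/-- A backward deterministic acyclic net: an acyclic net with `|pre p| ≤ 1` for each place. -/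
def IsBDAN (N : Net α) : Prop :=
  IsAcyclicNet N ∧ ∀ p ∈ N.places, (N.pre p).Subsingleton

/-- `N` is a subnet of `M`: nonempty set of places included, transitions included,
flow is the restriction of that of `M`, and every transition of `N` retains its
full preset and postset from `M`. -/
def IsSubnet (N M : Net α) : Prop :=
  N.places.Nonempty ∧ N.places ⊆ M.places ∧ N.transitions ⊆ M.transitions ∧
  (∀ x y, N.flow x y ↔ M.flow x y ∧
    ((x ∈ N.places ∧ y ∈ N.transitions) ∨ (x ∈ N.transitions ∧ y ∈ N.places))) ∧
  (∀ t ∈ N.transitions, N.pre t = M.pre t ∧ N.post t = M.post t)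

/-- `N` is a co-initial subnet of `M` : a subnet with the same initial places. -/
def CoInitial (N M : Net α) : Prop := IsSubnet N M ∧ N.initPlaces = M.initPlaces

/-- A step: a nonempty set of transitions with pairwise disjoint presets. -/
def IsStep (N : Net α) (U : Set α) : Prop :=
  U.Nonempty ∧ U ⊆ N.transitions ∧ ∀ t ∈ U, ∀ u ∈ U, t ≠ u → N.pre t ∩ N.pre u = ∅

/-- A step `U` is enabled at marking `M` if all its pre-places are in `M`. -/
def Enabled (N : Net α) (M U : Set α) : Prop := IsStep N U ∧ N.preSet U ⊆ M

/-- Executing an enabled step `U` at `M` yields `M' = (M ∪ post U) \ pre U`. -/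
def StepTrans (N : Net α) (M U M' : Set α) : Prop :=
  Enabled N M U ∧ M' = (M ∪ N.postSet U) \ N.preSet U

/-- Step sequences from a marking to a marking. -/
inductive StepSeqFrom (N : Net α) : Set α → List (Set α) → Set α → Prop
  | nil (M : Set α) : StepSeqFrom N M [] M
  | cons {M U M' σ M''} : StepTrans N M U M' → StepSeqFrom N M' σ M'' →
      StepSeqFrom N M (U :: σ) M''

/-- The initial marking: the set of initial places. -/
def initMarking (N : Net α) : Set α := N.initPlaces

/-- Step sequences executable from the initial marking. -/
def sseq (N : Net α) : Set (List (Set α)) := {σ | ∃ M, StepSeqFrom N N.initMarking σ M}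

/-- Mixed step sequences: alternating steps and resulting markings from a marking. -/
inductive MixFrom (N : Net α) : Set α → List (Set α × Set α) → Prop
  | nil (M : Set α) : MixFrom N M []
  | cons {M U M' l} : StepTrans N M U M' → MixFrom N M' l → MixFrom N M ((U, M') :: l)

/-- Mixed step sequences from the initial marking, represented as the initial marking
paired with the list of consecutive (step, marking) pairs. -/
def mixsseq (N : Net α) : Set (Set α × List (Set α × Set α)) :=
  {p | p.1 = N.initMarking ∧ MixFrom N p.1 p.2}

/-- Markings reachable from the initial marking. -/
def reach (N : Net α) : Set (Set α) := {M | ∃ σ, StepSeqFrom N N.initMarking σ M}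

/-- Firing sequences: step sequences all of whose steps are singletons. -/
def fseq (N : Net α) : Set (List (Set α)) :=
  {σ | σ ∈ N.sseq ∧ ∀ U ∈ σ, ∃ t, U = {t}}

/-- Maximal step sequences: no step can be appended. -/
def maxsseq (N : Net α) : Set (List (Set α)) :=
  {σ | σ ∈ N.sseq ∧ ¬ ∃ U, σ ++ [U] ∈ N.sseq}

/-- Maximal mixed step sequences: no step and marking can be appended. -/
def maxmixsseq (N : Net α) : Set (Set α × List (Set α × Set α)) :=
  {p | p ∈ N.mixsseq ∧ ¬ ∃ U M, (p.1, p.2 ++ [(U, M)]) ∈ N.mixsseq}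

/-- Final reachable markings: markings reached by maximal step sequences. -/
def finreach (N : Net α) : Set (Set α) :=
  {M | ∃ σ ∈ N.maxsseq, StepSeqFrom N N.initMarking σ M}

/-- A step sequence is well-formed if post-sets of distinct transitions in the same
step are disjoint, and post-sets of distinct steps are disjoint. -/
def WellFormedSeq (N : Net α) (σ : List (Set α)) : Prop :=
  (∀ U ∈ σ, ∀ t ∈ U, ∀ u ∈ U, t ≠ u → N.post t ∩ N.post u = ∅) ∧
  σ.Pairwise (fun U V => N.postSet U ∩ N.postSet V = ∅)

/-- The set of transitions occurring in a step sequence. -/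
def transOf (σ : List (Set α)) : Set α := {t | ∃ U ∈ σ, t ∈ U}

/-- A net is well-formed if each transition occurs in at least one step sequence and
all step sequences are well-formed. -/
def WellFormedNet (N : Net α) : Prop :=
  (∀ t ∈ N.transitions, ∃ σ ∈ N.sseq, t ∈ transOf σ) ∧
  (∀ σ ∈ N.sseq, N.WellFormedSeq σ)

/-- Scenarios of a net: occurrence nets that are co-initial subnets of it. -/
def scenarios (N : Net α) : Set (Net α) :=
  {S | IsOccurrenceNet S ∧ CoInitial S N}

/-- Maximal scenarios: scenarios not strictly included (co-initially) in another scenario. -/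
def maxscenarios (N : Net α) : Set (Net α) :=
  {S | S ∈ N.scenarios ∧ ¬ ∃ S', S' ∈ N.scenarios ∧ S' ≠ S ∧ CoInitial S S'}

/-- The scenario induced by a (well-formed) step sequence `σ`:
transitions are those occurring in `σ`, places are the initial places together with
the postsets of those transitions, and the flow is the restriction. -/
def inducedScenario (N : Net α) (σ : List (Set α)) : Net α where
  places := N.initMarking ∪ N.postSet (transOf σ)
  transitions := transOf σ
  flow := fun x y => N.flow x y ∧
    ((x ∈ N.initMarking ∪ N.postSet (transOf σ) ∧ y ∈ transOf σ) ∨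
     (x ∈ transOf σ ∧ y ∈ N.initMarking ∪ N.postSet (transOf σ)))

end Net

/-!
Firing the transitions of a finite step one at a time is always possible, since their presets are
disjoint, and it loses no tokens: a token in `(M ∪ post U) \ pre U` is never consumed. Extra tokens
may survive, when a transition puts a token on a place that an earlier one has emptied, but they
are harmless because the firing rule is monotone in the marking. Hence every step sequence with
finite steps can be sequentialized into a firing sequence with the same transitions. Both clauses
of well-formedness, within a step and between steps, say together that distinct occurrences of
transitions have disjoint postsets, so the sequentialization is well-formed exactly when the
original step sequence is.
-/

namespace Net

variable {α : Type*} {N : Net α} {M M' M'' M₀ U V : Set α} {σ τ : List (Set α)} {t : α}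

@[simp]
theorem preSet_singleton (N : Net α) (t : α) : N.preSet {t} = N.pre t :=
  Set.biUnion_singleton t N.pre

@[simp]
theorem postSet_singleton (N : Net α) (t : α) : N.postSet {t} = N.post t :=
  Set.biUnion_singleton t N.post

@[simp]
theorem preSet_insert (N : Net α) (t : α) (U : Set α) :
    N.preSet (insert t U) = N.pre t ∪ N.preSet U :=
  Set.biUnion_insert t U N.pre

@[simp]
theorem postSet_insert (N : Net α) (t : α) (U : Set α) :
    N.postSet (insert t U) = N.post t ∪ N.postSet U :=
  Set.biUnion_insert t U N.post

theorem pre_subset_preSet (ht : t ∈ U) : N.pre t ⊆ N.preSet U :=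
  Set.subset_biUnion_of_mem ht

theorem postSet_inter_postSet_eq_empty :
    N.postSet U ∩ N.postSet V = ∅ ↔ ∀ t ∈ U, ∀ u ∈ V, N.post t ∩ N.post u = ∅ := by
  simp only [postSet, ← Set.disjoint_iff_inter_eq_empty]
  rw [Set.disjoint_iUnion₂_left]
  simp only [Set.disjoint_iUnion₂_right]

theorem stepTrans_singleton (ht : t ∈ N.transitions) (htM : N.pre t ⊆ M) :
    StepTrans N M {t} ((M ∪ N.post t) \ N.pre t) := by
  have hstep : N.IsStep {t} :=
    ⟨Set.singleton_nonempty t, Set.singleton_subset_iff.2 ht,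
      fun _ hu _ hv huv => absurd (hu.trans hv.symm) huv⟩
  exact ⟨⟨hstep, by rwa [preSet_singleton]⟩, by rw [preSet_singleton, postSet_singleton]⟩

theorem StepTrans.mono (h : StepTrans N M U M') (hM : M ⊆ M₀) :
    ∃ M₀', StepTrans N M₀ U M₀' ∧ M' ⊆ M₀' := by
  obtain ⟨⟨hstep, hpre⟩, rfl⟩ := h
  exact ⟨_, ⟨⟨hstep, hpre.trans hM⟩, rfl⟩, by gcongr⟩

theorem StepSeqFrom.mono (h : StepSeqFrom N M σ M') (hM : M ⊆ M₀) :
    ∃ M₀', StepSeqFrom N M₀ σ M₀' ∧ M' ⊆ M₀' := by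
  induction h generalizing M₀ with
  | nil => exact ⟨M₀, .nil M₀, hM⟩
  | cons hU _ ih =>
    obtain ⟨M₁, hU₀, hM₁⟩ := hU.mono hM
    obtain ⟨M₂, hσ₀, hM₂⟩ := ih hM₁
    exact ⟨M₂, .cons hU₀ hσ₀, hM₂⟩

theorem StepSeqFrom.append (hσ : StepSeqFrom N M σ M') (hτ : StepSeqFrom N M' τ M'') :
    StepSeqFrom N M (σ ++ τ) M'' := by
  induction hσ with
  | nil => exact hτ
  | cons hU _ ih => exact .cons hU (ih hτ)

theorem StepSeqFrom.subset_transitions (h : StepSeqFrom N M σ M') :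
    ∀ U ∈ σ, U ⊆ N.transitions := by
  induction h with
  | nil => exact List.forall_mem_nil _
  | cons hU _ ih => exact List.forall_mem_cons.2 ⟨hU.1.1.2.1, ih⟩

theorem exists_stepSeqFrom_map_singleton {l : List α} (hl : ∀ t ∈ l, t ∈ N.transitions)
    (hdisj : l.Pairwise fun t u => N.pre t ∩ N.pre u = ∅) (hpre : ∀ t ∈ l, N.pre t ⊆ M) :
    ∃ M', StepSeqFrom N M (l.map singleton) M' ∧
      (M ∪ N.postSet {t | t ∈ l}) \ N.preSet {t | t ∈ l} ⊆ M' := by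
  induction l generalizing M with
  | nil => exact ⟨M, .nil M, by simp [postSet]⟩
  | cons a l ih =>
    simp only [List.forall_mem_cons] at hl hpre
    obtain ⟨ha, hdisj⟩ := List.pairwise_cons.1 hdisj
    have hpre_next : ∀ t ∈ l, N.pre t ⊆ (M ∪ N.post a) \ N.pre a := fun t ht =>
      Set.subset_sdiff.2 ⟨(hpre.2 t ht).trans Set.subset_union_left,
        (Set.disjoint_iff_inter_eq_empty.2 (ha t ht)).symm⟩
    obtain ⟨M', hseq, hM'⟩ := ih hl.2 hdisj hpre_next
    refine ⟨M', .cons (stepTrans_singleton hl.1 hpre.1) hseq, Set.Subset.trans ?_ hM'⟩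
    have hcons : {t | t ∈ a :: l} = insert a {t | t ∈ l} := by ext; simp
    rw [hcons, preSet_insert, postSet_insert]
    grind

theorem StepTrans.exists_stepSeqFrom_toList {U : Finset α} (h : StepTrans N M U M') :
    ∃ M'', StepSeqFrom N M (U.toList.map singleton) M'' ∧ M' ⊆ M'' := by
  obtain ⟨⟨⟨-, htrans, hdisj⟩, hpre⟩, rfl⟩ := h
  have hdisj' : U.toList.Pairwise fun t u => N.pre t ∩ N.pre u = ∅ :=
    U.nodup_toList.imp_of_mem fun ht hu =>
      hdisj _ (Finset.mem_toList.1 ht) _ (Finset.mem_toList.1 hu)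
  have hU : {t | t ∈ U.toList} = (U : Set α) := by ext; simp
  rw [← hU] at htrans hpre ⊢
  exact exists_stepSeqFrom_map_singleton htrans hdisj' fun t ht =>
    (pre_subset_preSet (U := {t | t ∈ U.toList}) ht).trans hpre

/-- A sequentialization of a sequence of finite steps: each step is replaced by the singletons of
its elements, in the arbitrary order given by `Finset.toList`. -/
noncomputable def sequentialize (σ : List (Finset α)) : List (Set α) :=
  (σ.flatMap Finset.toList).map singleton

theorem sequentialize_cons (U : Finset α) (σ : List (Finset α)) :
    sequentialize (U :: σ) = U.toList.map singleton ++ sequentialize σ := by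
  simp only [sequentialize, List.flatMap_cons, List.map_append]

theorem transOf_sequentialize (σ : List (Finset α)) :
    transOf (sequentialize σ) = transOf (σ.map (↑)) := by
  ext t
  simp [transOf, sequentialize]

theorem StepSeqFrom.exists_sequentialize {σ : List (Finset α)}
    (h : StepSeqFrom N M (σ.map (↑)) M') :
    ∃ M'', StepSeqFrom N M (sequentialize σ) M'' ∧ M' ⊆ M'' := by
  induction σ generalizing M with
  | nil => exact ⟨M', h, subset_rfl⟩
  | cons U σ ih =>
    cases h with
    | cons hU hσ =>
      obtain ⟨M₁, hfire, hM₁⟩ := hU.exists_stepSeqFrom_toList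
      obtain ⟨M₂, hseq, hM₂⟩ := ih hσ
      obtain ⟨M₃, hseq', hM₃⟩ := hseq.mono hM₁
      rw [sequentialize_cons]
      exact ⟨M₃, hfire.append hseq', hM₂.trans hM₃⟩

theorem sequentialize_mem_fseq {σ : List (Finset α)} (h : σ.map (↑) ∈ N.sseq) :
    sequentialize σ ∈ N.fseq := by
  obtain ⟨M, hM⟩ := h
  obtain ⟨M', hM', -⟩ := hM.exists_sequentialize
  refine ⟨⟨M', hM'⟩, fun U hU => ?_⟩
  obtain ⟨t, -, rfl⟩ := List.mem_map.1 hU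
  exact ⟨t, rfl⟩

theorem wellFormedSeq_map_singleton {l : List α} :
    N.WellFormedSeq (l.map singleton) ↔ l.Pairwise fun t u => N.post t ∩ N.post u = ∅ := by
  simp +contextual [WellFormedSeq, List.pairwise_map]

theorem wellFormedSeq_map_coe {σ : List (Finset α)} :
    N.WellFormedSeq (σ.map (↑)) ↔
      (σ.flatMap Finset.toList).Pairwise fun t u => N.post t ∩ N.post u = ∅ := by
  have : Std.Symm fun t u => N.post t ∩ N.post u = ∅ :=
    ⟨fun t u h => by rwa [Set.inter_comm]⟩
  have hwithin (U : Finset α) :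
      (∀ t ∈ U, ∀ u ∈ U, t ≠ u → N.post t ∩ N.post u = ∅) ↔
        U.toList.Pairwise fun t u => N.post t ∩ N.post u = ∅ := by
    simp [← U.nodup_toList.pairwise_coe, Set.Pairwise]
  simp [WellFormedSeq, List.pairwise_map, List.pairwise_flatMap, hwithin,
    postSet_inter_postSet_eq_empty]

theorem wellFormedSeq_sequentialize {σ : List (Finset α)} :
    N.WellFormedSeq (sequentialize σ) ↔ N.WellFormedSeq (σ.map (↑)) :=
  wellFormedSeq_map_singleton.trans wellFormedSeq_map_coe.symm

end Net

theorem stmt8_general {α : Type*} (N : Net α) (hfin : ∀ σ ∈ N.sseq, ∀ U ∈ σ, U.Finite) :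
    N.WellFormedNet ↔
      ((∀ t ∈ N.transitions, ∃ σ ∈ N.fseq, t ∈ Net.transOf σ) ∧
       (∀ σ ∈ N.fseq, N.WellFormedSeq σ)) := by
  constructor
  · rintro ⟨hocc, hwf⟩
    refine ⟨fun t ht => ?_, fun σ hσ => hwf σ hσ.1⟩
    obtain ⟨σ, hσ, htσ⟩ := hocc t ht
    lift σ to List (Finset α) using hfin σ hσ
    exact ⟨_, Net.sequentialize_mem_fseq hσ, by rwa [Net.transOf_sequentialize]⟩
  · rintro ⟨hocc, hwf⟩
    refine ⟨fun t ht => ?_, fun σ hσ => ?_⟩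
    · obtain ⟨σ, hσ, htσ⟩ := hocc t ht
      exact ⟨σ, hσ.1, htσ⟩
    · lift σ to List (Finset α) using hfin σ hσ
      exact Net.wellFormedSeq_sequentialize.1 (hwf _ (Net.sequentialize_mem_fseq hσ))

/-- An acyclic net is well-formed iff each transition occurs in at least
one firing sequence and all firing sequences are well-formed. -/
theorem stmt8 {α : Type*} (N : Net α) (h : N.IsAcyclicNet) :
    N.WellFormedNet ↔
      ((∀ t ∈ N.transitions, ∃ σ ∈ N.fseq, t ∈ Net.transOf σ) ∧
       (∀ σ ∈ N.fseq, N.WellFormedSeq σ)) := by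
  exact stmt8_general N fun _ ⟨_, hσ⟩ U hU => h.2.1.subset (hσ.subset_transitions U hU)
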